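/- Let A = (a_{ijk}) ∈ ℝ^{n×n×n} be a piezoelectric-type tensor, λ a C-eigenvalue of A with associated left and right C-eigenvectors x and y, S ⊆ N any subset, and let p, q ∈ N be indices with |x_p| = max_{i∈N} |x_i| and |y_q| = max_{i∈N} |y_i|. Then |λ| ≤ (1/2)( R_q^{Δ_S,(3)}(A) + ( (R_q^{Δ_S,(3)}(A))² + 4 R_p^{(1)}(A) R_q^{Δ̄_S,(3)}(A) )^{1/2} ). -/

import Mathlib

open Finset

/-- `λ` is a C-eigenvalue of the piezoelectric-type tensor `a` with left C-eigenvector `x`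
and right C-eigenvector `y`:
`A y y = λ x`, `x A y = λ y`, `xᵀ x = 1`, `yᵀ y = 1`. -/
def CEig {n : ℕ} (a : Fin n → Fin n → Fin n → ℝ) (lam : ℝ) (x y : Fin n → ℝ) : Prop :=
  (∀ i, ∑ j, ∑ k, a i j k * y j * y k = lam * x i) ∧
  (∀ i, ∑ j, ∑ k, a j k i * x j * y k = lam * y i) ∧
  (∑ i, x i * x i = 1) ∧ (∑ i, y i * y i = 1)

/-- `R_i^{(1)}(A) = ∑_{l,k} |a_{ilk}|`. -/
noncomputable def R1 {n : ℕ} (a : Fin n → Fin n → Fin n → ℝ) (i : Fin n) : ℝ :=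
  ∑ l, ∑ k, |a i l k|

/-- `R_j^{(3)}(A) = ∑_{l,k} |a_{lkj}|`. -/
noncomputable def R3 {n : ℕ} (a : Fin n → Fin n → Fin n → ℝ) (j : Fin n) : ℝ :=
  ∑ l, ∑ k, |a l k j|

/-- `R_j^{Δ_S,(3)}(A) = ∑_{(l,k) : l ∈ S or k ∈ S} |a_{lkj}|`. -/
noncomputable def R3D {n : ℕ} (a : Fin n → Fin n → Fin n → ℝ) (S : Finset (Fin n))
    (j : Fin n) : ℝ :=
  ∑ l, ∑ k, if l ∈ S ∨ k ∈ S then |a l k j| else 0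

/-- `R_j^{Δ̄_S,(3)}(A) = ∑_{(l,k) : l ∉ S and k ∉ S} |a_{lkj}|`. -/
noncomputable def R3Dbar {n : ℕ} (a : Fin n → Fin n → Fin n → ℝ) (S : Finset (Fin n))
    (j : Fin n) : ℝ :=
  ∑ l, ∑ k, if l ∉ S ∧ k ∉ S then |a l k j| else 0

/-!
The first eigen-equation at `p` gives `|λ| |x_p| ≤ R_p^{(1)}`. In the second one at `q`, bounding
`|x_l|` by `1` on `Δ_S` and by `|x_p|` on `Δ̄_S`, and then dividing by `|y_q|`, gives
`|λ| ≤ R_q^{Δ_S,(3)} + R_q^{Δ̄_S,(3)} |x_p|`. Multiplying by `|λ|` eliminates `x_p` and leaves a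
quadratic inequality in `|λ|`.
-/

section NormBounds

variable {ι κ 𝕜 : Type*} [NormedRing 𝕜]

theorem norm_sum_mul_mul_le (s : Finset ι) (b u v : ι → 𝕜) {r t : ℝ}
    (hu : ∀ i ∈ s, ‖u i‖ ≤ r) (hv : ∀ i ∈ s, ‖v i‖ ≤ t) :
    ‖∑ i ∈ s, b i * u i * v i‖ ≤ (∑ i ∈ s, ‖b i‖) * r * t := by
  rw [sum_mul, sum_mul]
  refine norm_sum_le_of_le s fun i hi => ?_
  have hr : 0 ≤ r := (norm_nonneg (u i)).trans (hu i hi)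
  calc ‖b i * u i * v i‖ ≤ ‖b i‖ * ‖u i‖ * ‖v i‖ := norm_mul₃_le
    _ ≤ ‖b i‖ * r * t := by gcongr; exacts [hu i hi, hv i hi]

variable [Fintype ι] [Fintype κ]

theorem norm_sum_sum_mul_mul_le_of_norm_le_one (b : ι → κ → 𝕜) {u : ι → 𝕜} {v : κ → 𝕜}
    (hu : ∀ i, ‖u i‖ ≤ 1) (hv : ∀ j, ‖v j‖ ≤ 1) :
    ‖∑ i, ∑ j, b i j * u i * v j‖ ≤ ∑ i, ∑ j, ‖b i j‖ := by
  simpa only [Fintype.sum_prod_type, mul_one] using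
    norm_sum_mul_mul_le univ (fun ij : ι × κ => b ij.1 ij.2) (fun ij => u ij.1)
      (fun ij => v ij.2) (fun ij _ => hu ij.1) (fun ij _ => hv ij.2)

theorem norm_sum_sum_mul_mul_le_add_compl [DecidableEq ι] [DecidableEq κ] (b : ι → κ → 𝕜)
    {u : ι → 𝕜} {v : κ → 𝕜} (D : Finset (ι × κ)) {r r' t : ℝ}
    (hu : ∀ i, ‖u i‖ ≤ r) (hu' : ∀ i, ‖u i‖ ≤ r') (hv : ∀ j, ‖v j‖ ≤ t) :
    ‖∑ i, ∑ j, b i j * u i * v j‖ ≤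
      ((∑ ij ∈ D, ‖b ij.1 ij.2‖) * r + (∑ ij ∈ Dᶜ, ‖b ij.1 ij.2‖) * r') * t := by
  rw [← Fintype.sum_prod_type' fun i j => b i j * u i * v j, ← sum_add_sum_compl D, add_mul]
  exact norm_add_le_of_le
    (norm_sum_mul_mul_le D _ _ _ (fun ij _ => hu ij.1) fun ij _ => hv ij.2)
    (norm_sum_mul_mul_le Dᶜ _ _ _ (fun ij _ => hu' ij.1) fun ij _ => hv ij.2)

end NormBounds

theorem le_half_add_sqrt_of_sq_le {t b c : ℝ} (h : t ^ 2 ≤ b * t + c) :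
    t ≤ (1 / 2) * (b + √(b ^ 2 + 4 * c)) := by
  have hsqrt : 2 * t - b ≤ √(b ^ 2 + 4 * c) := Real.le_sqrt_of_sq_le (by linarith)
  linarith

theorem stmt14_general {ι κ 𝕜 : Type*} [Fintype ι] [Fintype κ] [DecidableEq ι] [DecidableEq κ]
    [NormedRing 𝕜] [NormMulClass 𝕜] (a : ι → κ → κ → 𝕜) {lam : 𝕜} {x : ι → 𝕜} {y : κ → 𝕜}
    (D : Finset (ι × κ)) {p : ι} {q : κ}
    (hleft : ∑ j, ∑ k, a p j k * y j * y k = lam * x p)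
    (hright : ∑ j, ∑ k, a j k q * x j * y k = lam * y q)
    (hx : ∀ i, ‖x i‖ ≤ 1) (hy : ∀ j, ‖y j‖ ≤ 1) (hy0 : y ≠ 0)
    (hp : ∀ i, ‖x i‖ ≤ ‖x p‖) (hq : ∀ j, ‖y j‖ ≤ ‖y q‖) :
    ‖lam‖ ≤ (1 / 2) * (∑ ij ∈ D, ‖a ij.1 ij.2 q‖ +
      √((∑ ij ∈ D, ‖a ij.1 ij.2 q‖) ^ 2 +
        4 * (∑ j, ∑ k, ‖a p j k‖) * ∑ ij ∈ Dᶜ, ‖a ij.1 ij.2 q‖)) := by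
  set R := ∑ ij ∈ D, ‖a ij.1 ij.2 q‖
  set R' := ∑ ij ∈ Dᶜ, ‖a ij.1 ij.2 q‖
  set R₁ := ∑ j, ∑ k, ‖a p j k‖
  have hyq : 0 < ‖y q‖ := by
    obtain ⟨j, hj⟩ := Function.ne_iff.mp hy0
    exact (norm_pos_iff.mpr hj).trans_le (hq j)
  have hrow : ‖lam‖ * ‖x p‖ ≤ R₁ := by
    rw [← norm_mul, ← hleft]
    exact norm_sum_sum_mul_mul_le_of_norm_le_one (a p) hy hy
  have hcol : ‖lam‖ ≤ R + R' * ‖x p‖ := by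
    refine le_of_mul_le_mul_right ?_ hyq
    rw [← norm_mul, ← hright, ← mul_one R]
    exact norm_sum_sum_mul_mul_le_add_compl (fun j k => a j k q) D hx hp hq
  rw [mul_assoc 4]
  refine le_half_add_sqrt_of_sq_le ?_
  calc ‖lam‖ ^ 2 = ‖lam‖ * ‖lam‖ := sq _
    _ ≤ ‖lam‖ * (R + R' * ‖x p‖) := by gcongr
    _ = R * ‖lam‖ + ‖lam‖ * ‖x p‖ * R' := by ring
    _ ≤ R * ‖lam‖ + R₁ * R' := by gcongr

theorem abs_le_one_of_sum_mul_self_le_one {ι 𝕜 : Type*} [Ring 𝕜] [LinearOrder 𝕜]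
    [IsStrictOrderedRing 𝕜] {s : Finset ι} {z : ι → 𝕜} (hz : ∑ i ∈ s, z i * z i ≤ 1)
    {i : ι} (hi : i ∈ s) : |z i| ≤ 1 :=
  abs_le_one_iff_mul_self_le_one.mpr <|
    (single_le_sum (fun j _ => mul_self_nonneg (z j)) hi).trans hz

namespace CEig

variable {n : ℕ} {a : Fin n → Fin n → Fin n → ℝ} {lam : ℝ} {x y : Fin n → ℝ}

theorem abs_left_le_one (h : CEig a lam x y) (i : Fin n) : |x i| ≤ 1 :=
  abs_le_one_of_sum_mul_self_le_one h.2.2.1.le (mem_univ i)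

theorem abs_right_le_one (h : CEig a lam x y) (i : Fin n) : |y i| ≤ 1 :=
  abs_le_one_of_sum_mul_self_le_one h.2.2.2.le (mem_univ i)

theorem right_ne_zero (h : CEig a lam x y) : y ≠ 0 := by
  rintro rfl
  simpa using h.2.2.2

end CEig

/-- The index set `Δ_S` of pairs having at least one entry in `S`; its complement is `Δ̄_S`. -/
def pairsMeeting {α : Type*} [Fintype α] [DecidableEq α] (S : Finset α) : Finset (α × α) :=
  {lk | lk.1 ∈ S ∨ lk.2 ∈ S}

section PartialSums

variable {n : ℕ} (a : Fin n → Fin n → Fin n → ℝ) (S : Finset (Fin n)) (j : Fin n)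

theorem R3D_eq_sum_pairsMeeting : R3D a S j = ∑ lk ∈ pairsMeeting S, |a lk.1 lk.2 j| := by
  simp only [R3D, pairsMeeting, sum_filter, Fintype.sum_prod_type]

theorem R3Dbar_eq_sum_compl_pairsMeeting :
    R3Dbar a S j = ∑ lk ∈ (pairsMeeting S)ᶜ, |a lk.1 lk.2 j| := by
  simp only [R3Dbar, pairsMeeting, compl_filter, not_or, sum_filter, Fintype.sum_prod_type]

end PartialSums

/-- `|λ| ≤ (1/2)(R_q^{Δ_S,(3)} + ((R_q^{Δ_S,(3)})² + 4 R_p^{(1)} R_q^{Δ̄_S,(3)})^{1/2})`. -/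
theorem stmt14 {n : ℕ} (a : Fin n → Fin n → Fin n → ℝ)
    (hA : ∀ i j k, a i j k = a i k j)
    (lam : ℝ) (x y : Fin n → ℝ) (h : CEig a lam x y)
    (S : Finset (Fin n))
    (p q : Fin n) (hp : ∀ i, |x i| ≤ |x p|) (hq : ∀ i, |y i| ≤ |y q|) :
    |lam| ≤ (1 / 2) * (R3D a S q +
      Real.sqrt ((R3D a S q) ^ 2 + 4 * R1 a p * R3Dbar a S q)) := by
  rw [R3D_eq_sum_pairsMeeting, R3Dbar_eq_sum_compl_pairsMeeting]
  exact stmt14_general a (pairsMeeting S) (h.1 p) (h.2.1 q) h.abs_left_le_one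
    h.abs_right_le_one h.right_ne_zero hp hq
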